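/- Asymptotic stability criterion (main theorem): suppose V is a weak Lyapunov-like function for 𝒯′ (with Ω = ℝⁿ) and that M = {0} × Γ* is the maximal weakly-invariant set with respect to 𝒯_V* ∩ 𝒯[χ] ∩ 𝒯_a, where Γ* = {γ ∈ Γ : 0 ∈ χ_γ} and f(0,γ) = 0 for all γ ∈ Γ*. Then 𝒯′ is globally asymptotically stable: uniformly stable and every x(t) with (x,σ) ∈ 𝒯′ converges to 0 as t → ∞. -/

import Mathlib

open Filter Set MeasureTheory Metric

/-- The switching times (points of left-discontinuity) of a signal `σ` on `(0,∞)`. -/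
def SwitchTimes {Γ : Type*} (σ : ℝ → Γ) : Set ℝ :=
  {s | 0 < s ∧ ∀ ε > 0, ∃ u, s - ε < u ∧ u < s ∧ σ u ≠ σ s}

/-- `σ` is locally constant from the right at every time (right-continuity and
piecewise constancy from the right). -/
def RightLocConst {Γ : Type*} (σ : ℝ → Γ) : Prop :=
  ∀ s : ℝ, ∃ ε > 0, ∀ u : ℝ, s ≤ u → u < s + ε → σ u = σ s

/-- `σ` has average dwell-time `τD` and chatter bound `N₀`: the number of switching
times in any open interval `(τ₁,τ₂) ⊆ ℝ₊` is at most `N₀ + (τ₂ - τ₁)/τD`. -/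
def HasADT {Γ : Type*} (σ : ℝ → Γ) (τD : ℝ) (N₀ : ℕ) : Prop :=
  ∀ τ₁ τ₂ : ℝ, 0 ≤ τ₁ → τ₁ < τ₂ →
    (Nat.card ↥(SwitchTimes σ ∩ Set.Ioo τ₁ τ₂) : ℝ) ≤ (N₀ : ℝ) + (τ₂ - τ₁) / τD

/-- A switching signal with average dwell-time `τD > 0` and chatter bound `N₀`:
piecewise constant, right-continuous, with the average dwell-time property. -/
def IsSwitchingSignal {Γ : Type*} (σ : ℝ → Γ) (τD : ℝ) (N₀ : ℕ) : Prop :=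
  RightLocConst σ ∧ HasADT σ τD N₀

/-- A trajectory of the switched system `ẋ = f(x,σ)`: a continuous curve satisfying the
integral equation on `[0,∞)`. -/
def IsTrajectory {n m : ℕ}
    (f : EuclideanSpace ℝ (Fin n) → Fin m → EuclideanSpace ℝ (Fin n))
    (x : ℝ → EuclideanSpace ℝ (Fin n)) (σ : ℝ → Fin m) : Prop :=
  ContinuousOn x (Set.Ici 0) ∧
  ∀ t : ℝ, 0 ≤ t → x t = x 0 + ∫ s in (0:ℝ)..t, f (x s) (σ s)

/-- A class-`𝒦_∞` function (modeled on `[0,∞)`): continuous, strictly increasing on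
`[0,∞)`, vanishing at `0`, unbounded. -/
def IsKinf (α : ℝ → ℝ) : Prop :=
  Continuous α ∧ StrictMonoOn α (Set.Ici 0) ∧ α 0 = 0 ∧
    Filter.Tendsto α Filter.atTop Filter.atTop

/-- The state constraint `x(t) ∈ χ_{σ(t)}` for all `t ≥ 0` (membership in `𝒯[χ]`). -/
def InTchi {n m : ℕ} (χ : Fin m → Set (EuclideanSpace ℝ (Fin n)))
    (x : ℝ → EuclideanSpace ℝ (Fin n)) (σ : ℝ → Fin m) : Prop :=
  ∀ t : ℝ, 0 ≤ t → x t ∈ χ (σ t)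

/-- `V` is a weak Lyapunov-like function for the family `T'` of trajectories:
(1) `V` is `C¹` in the state and sandwiched between two `𝒦_∞` functions of the norm
on each `χ_γ`; (2) its derivative along the `γ`-th vector field is `≤ 0` on `χ_γ`;
(3) for every trajectory of `T'` and switching times `s < s'` of its signal (with
`s` a switching time or `0`) carrying the same index, `V` at `s'` is at most `V`
evaluated at the switching time `s''` immediately following `s` (with index `σ s`). -/
def IsWeakLyap {n m : ℕ}
    (f : EuclideanSpace ℝ (Fin n) → Fin m → EuclideanSpace ℝ (Fin n))
    (χ : Fin m → Set (EuclideanSpace ℝ (Fin n)))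
    (T' : Set ((ℝ → EuclideanSpace ℝ (Fin n)) × (ℝ → Fin m)))
    (V : EuclideanSpace ℝ (Fin n) → Fin m → ℝ) : Prop :=
  (∀ γ : Fin m, ContDiff ℝ 1 (fun ξ => V ξ γ)) ∧
  (∃ α₁ α₂ : ℝ → ℝ, IsKinf α₁ ∧ IsKinf α₂ ∧
    ∀ ξ, ∀ γ : Fin m, ξ ∈ χ γ → α₁ ‖ξ‖ ≤ V ξ γ ∧ V ξ γ ≤ α₂ ‖ξ‖) ∧
  (∀ ξ, ∀ γ : Fin m, ξ ∈ χ γ → fderiv ℝ (fun ζ => V ζ γ) ξ (f ξ γ) ≤ 0) ∧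
  (∀ p ∈ T', ∀ s s'' s' : ℝ,
    s ∈ insert (0:ℝ) (SwitchTimes p.2) → s'' ∈ SwitchTimes p.2 →
    s' ∈ SwitchTimes p.2 → s < s'' →
    (∀ u ∈ Set.Ioo s s'', u ∉ SwitchTimes p.2) →
    s < s' → p.2 s = p.2 s' →
    V (p.1 s') (p.2 s') ≤ V (p.1 s'') (p.2 s))
/-- Membership in `𝒯_V`: the state stays in `Ω` and `V(x(·),σ(·))` does not increase
between times carrying the same switching index. -/
def InTV {n m : ℕ} (Ω : Set (EuclideanSpace ℝ (Fin n)))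
    (V : EuclideanSpace ℝ (Fin n) → Fin m → ℝ)
    (x : ℝ → EuclideanSpace ℝ (Fin n)) (σ : ℝ → Fin m) : Prop :=
  (∀ t : ℝ, 0 ≤ t → x t ∈ Ω) ∧
  ∀ t t' : ℝ, 0 ≤ t → t ≤ t' → σ t = σ t' →
    V (x t') (σ t') ≤ V (x t) (σ t)

/-- Membership in `𝒯_V^*`: in `𝒯_V`, and `V(x(·),σ(·))` takes equal values at any two
times carrying the same switching index. -/
def InTVstar {n m : ℕ} (Ω : Set (EuclideanSpace ℝ (Fin n)))
    (V : EuclideanSpace ℝ (Fin n) → Fin m → ℝ)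
    (x : ℝ → EuclideanSpace ℝ (Fin n)) (σ : ℝ → Fin m) : Prop :=
  InTV Ω V x σ ∧
  ∀ t t' : ℝ, 0 ≤ t → 0 ≤ t' → σ t = σ t' →
    V (x t) (σ t) = V (x t') (σ t')

/-- Weak invariance of a set `M ⊆ ℝⁿ × Γ` with respect to a family `C` of trajectories. -/
def WeaklyInvariant {n m : ℕ}
    (C : Set ((ℝ → EuclideanSpace ℝ (Fin n)) × (ℝ → Fin m)))
    (M : Set (EuclideanSpace ℝ (Fin n) × Fin m)) : Prop :=
  ∀ p ∈ M, ∃ q ∈ C, q.1 0 = p.1 ∧ q.2 0 = p.2 ∧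
    ∀ t : ℝ, 0 ≤ t → (q.1 t, q.2 t) ∈ M


theorem aux_const {Γ : Type*} {σ : ℝ → Γ} (h : RightLocConst σ) {a b : ℝ} (ha : 0 ≤ a)
    (hs : ∀ u ∈ Ioc a b, u ∉ SwitchTimes σ) : ∀ u ∈ Icc a b, σ u = σ a := by
  by_contra hcon
  push Not at hcon
  set S : Set ℝ := {u | u ∈ Icc a b ∧ σ u ≠ σ a} with hS
  have hne : S.Nonempty := by
    obtain ⟨u, hu, hu'⟩ := hcon
    exact ⟨u, hu, hu'⟩
  have hbdd : BddBelow S := ⟨a, fun u hu => hu.1.1⟩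
  set s := sInf S with hs_def
  have has : a ≤ s := le_csInf hne fun u hu => hu.1.1
  have hsb : s ≤ b := by
    obtain ⟨u, hu⟩ := hne
    exact (csInf_le hbdd hu).trans hu.1.2
  have hlt : ∀ u, a ≤ u → u < s → σ u = σ a := by
    intro u hau hus
    by_contra hc
    exact absurd (csInf_le hbdd (show u ∈ S from ⟨⟨hau, hus.le.trans hsb⟩, hc⟩)) (not_le.2 hus)
  by_cases hsa : σ s = σ a
  · obtain ⟨ε, hε, hc⟩ := h s
    obtain ⟨u, hu, hus⟩ := exists_lt_of_csInf_lt hne (show sInf S < s + ε by linarith)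
    exact hu.2 ((hc u (csInf_le hbdd hu) hus).trans hsa)
  · have hlt' : a < s := lt_of_le_of_ne has (fun h => hsa (by rw [← h]))
    have := hs s ⟨hlt', hsb⟩
    apply this
    refine ⟨by linarith, fun ε hε => ?_⟩
    refine ⟨max a (s - ε / 2), lt_max_of_lt_right (by linarith), max_lt hlt' (by linarith), ?_⟩
    rw [hlt _ (le_max_left _ _) (max_lt hlt' (by linarith))]
    exact fun h => hsa h.symm

theorem aux_fin {Γ : Type*} {σ : ℝ → Γ} {τD : ℝ} {N₀ : ℕ} (hτ : 0 < τD)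
    (h : IsSwitchingSignal σ τD N₀) (t : ℝ) : (SwitchTimes σ ∩ Ioo 0 t).Finite := by
  by_contra hcon
  set A : Set ℝ := {t | 0 ≤ t ∧ ¬ (SwitchTimes σ ∩ Ioo 0 t).Finite} with hA
  have hne : A.Nonempty := by
    refine ⟨t, ?_, hcon⟩
    by_contra ht
    apply hcon
    rw [Ioo_eq_empty (by linarith)]
    simp
  have hbdd : BddBelow A := ⟨0, fun u hu => hu.1⟩
  set s := sInf A with hs_def
  have hs0 : 0 ≤ s := le_csInf hne fun u hu => hu.1
  obtain ⟨ε, hε, hc⟩ := h.1 s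
  obtain ⟨t', ht', ht's⟩ := exists_lt_of_csInf_lt hne (show sInf A < s + ε by linarith)
  have hinf : (SwitchTimes σ ∩ Ioo 0 s).Infinite := by
    intro hfin
    apply ht'.2
    refine (hfin.union (finite_singleton s)).subset ?_
    rintro w ⟨hw, hw0, hwt⟩
    rcases lt_trichotomy w s with h1 | h1 | h1
    · exact Or.inl ⟨hw, hw0, h1⟩
    · exact Or.inr h1
    · exfalso
      obtain ⟨u, hu1, hu2, hu3⟩ := hw.2 (w - s) (by linarith)
      apply hu3
      rw [hc u (by linarith) (by linarith), hc w (by linarith) (by linarith)]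
  obtain ⟨k, hk⟩ := exists_nat_gt ((N₀ : ℝ) + s / τD)
  obtain ⟨F, hF, hFc⟩ := hinf.exists_subset_card_eq (k + 1)
  have hFne : F.Nonempty := by
    rw [← Finset.card_pos]; omega
  set M := F.max' hFne with hM
  have hMF : M ∈ F := F.max'_mem hFne
  have hMs : M < s := (hF hMF).2.2
  have hM0 : 0 < M := (hF hMF).2.1
  have hfin : (SwitchTimes σ ∩ Ioo 0 ((M + s) / 2)).Finite := by
    by_contra hc'
    have := csInf_le hbdd (show (M + s) / 2 ∈ A from ⟨by linarith, hc'⟩)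
    linarith
  have hsub : (F : Set ℝ) ⊆ SwitchTimes σ ∩ Ioo 0 ((M + s) / 2) := by
    intro w hw
    have := F.le_max' w hw
    exact ⟨(hF hw).1, (hF hw).2.1, by linarith⟩
  have h1 := Set.ncard_le_ncard hsub hfin
  rw [Set.ncard_coe_finset, hFc] at h1
  have h2 := h.2 0 ((M + s) / 2) le_rfl (by linarith)
  rw [Nat.card_coe_set_eq] at h2
  have h3 : ((k + 1 : ℕ) : ℝ) ≤ ((SwitchTimes σ ∩ Ioo 0 ((M + s) / 2)).ncard : ℝ) := by
    exact_mod_cast h1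
  have h4 : ((M + s) / 2 - 0) / τD ≤ s / τD := by
    apply div_le_div_of_nonneg_right _ hτ.le
    linarith
  push_cast at h3
  linarith

theorem aux_N {Γ : Type*} {σ : ℝ → Γ} {τD : ℝ} {N₀ : ℕ} (hτ : 0 < τD)
    (h : IsSwitchingSignal σ τD N₀) : ∃ N : ℝ → ℤ, Monotone N ∧
      (∀ a b, 0 ≤ a → a ≤ b → N a = N b → ∀ u ∈ Icc a b, σ u = σ a) ∧
      ∀ a b, 0 ≤ a → a ≤ b → (N b - N a : ℝ) ≤ N₀ + (b - a + 1) / τD := by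
  have hfin : ∀ t, (SwitchTimes σ ∩ Ioc 0 t).Finite := fun t =>
    (aux_fin hτ h (t + 1)).subset fun u hu => ⟨hu.1, hu.2.1, by linarith [hu.2.2]⟩
  refine ⟨fun t => ((SwitchTimes σ ∩ Ioc 0 t).ncard : ℤ), ?_, ?_, ?_⟩
  · intro a b hab
    have := Set.ncard_le_ncard (show SwitchTimes σ ∩ Ioc 0 a ⊆ SwitchTimes σ ∩ Ioc 0 b from
      fun u hu => ⟨hu.1, hu.2.1, hu.2.2.trans hab⟩) (hfin b)
    simpa using this
  · intro a b ha hab hN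
    have hN' : (SwitchTimes σ ∩ Ioc 0 a).ncard = (SwitchTimes σ ∩ Ioc 0 b).ncard := by
      simpa using hN
    have := Set.eq_of_subset_of_ncard_le (show SwitchTimes σ ∩ Ioc 0 a ⊆ SwitchTimes σ ∩ Ioc 0 b from
      fun u hu => ⟨hu.1, hu.2.1, hu.2.2.trans hab⟩) hN'.ge (hfin b)
    apply aux_const h.1 ha
    intro u hu hus
    have h1 : u ∈ SwitchTimes σ ∩ Ioc 0 b := ⟨hus, by linarith [hu.1], hu.2⟩
    rw [← this] at h1
    linarith [h1.2.2, hu.1]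
  · intro a b ha hab
    have h1 := h.2 a (b + 1) ha (by linarith)
    rw [Nat.card_coe_set_eq] at h1
    have hf2 : (SwitchTimes σ ∩ Ioo a (b + 1)).Finite :=
      (aux_fin hτ h (b + 1)).subset fun u hu => ⟨hu.1, by linarith [hu.2.1], hu.2.2⟩
    have h2 : (SwitchTimes σ ∩ Ioc 0 b).ncard ≤
        (SwitchTimes σ ∩ Ioc 0 a).ncard + (SwitchTimes σ ∩ Ioo a (b + 1)).ncard := by
      refine (Set.ncard_le_ncard ?_ ((hfin a).union hf2)).trans (Set.ncard_union_le _ _)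
      rintro u ⟨hu, hu0, hub⟩
      rcases le_or_gt u a with h' | h'
      · exact Or.inl ⟨hu, hu0, h'⟩
      · exact Or.inr ⟨hu, h', by linarith⟩
    have h3 : ((SwitchTimes σ ∩ Ioc 0 b).ncard : ℝ) ≤
        (SwitchTimes σ ∩ Ioc 0 a).ncard + (SwitchTimes σ ∩ Ioo a (b + 1)).ncard := by
      exact_mod_cast h2
    have h4 : b + 1 - a = b - a + 1 := by ring
    rw [h4] at h1
    push_cast
    linarith

theorem aux_meas {m : ℕ} {σ : ℝ → Fin m} (h : RightLocConst σ) : Measurable σ := by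
  have h1 : ∀ k : ℕ, Measurable (fun s : ℝ => σ ((⌊((k:ℝ) + 1) * s⌋ + 1 : ℝ) / ((k:ℝ) + 1))) := by
    intro k
    have : Measurable (fun s : ℝ => ⌊((k:ℝ) + 1) * s⌋) :=
      Int.measurable_floor.comp (measurable_const.mul measurable_id)
    exact (measurable_from_top (f := fun z : ℤ => σ ((z + 1 : ℝ) / ((k:ℝ) + 1)))).comp this
  refine measurable_of_tendsto_metrizable h1 ?_
  rw [tendsto_pi_nhds]
  intro s
  obtain ⟨ε, hε, hc⟩ := h s
  obtain ⟨K, hK⟩ := exists_nat_gt (1 / ε)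
  apply tendsto_const_nhds.congr'
  filter_upwards [eventually_ge_atTop K] with k hk
  symm
  have hk' : (K : ℝ) ≤ k := by exact_mod_cast hk
  have hp : (0:ℝ) < (k:ℝ) + 1 := by positivity
  have hε' : 1 < ε * ((k:ℝ) + 1) := by
    rw [div_lt_iff₀ hε] at hK
    nlinarith
  apply hc
  · rw [le_div_iff₀ hp]
    linarith [Int.lt_floor_add_one (((k:ℝ) + 1) * s)]
  · rw [div_lt_iff₀ hp]
    linarith [Int.floor_le (((k:ℝ) + 1) * s)]

theorem aux_int {n m : ℕ}
    {f : EuclideanSpace ℝ (Fin n) → Fin m → EuclideanSpace ℝ (Fin n)}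
    (hf : ∀ γ : Fin m, Continuous (fun ξ => f ξ γ))
    {x : ℝ → EuclideanSpace ℝ (Fin n)} {σ : ℝ → Fin m} (hx : ContinuousOn x (Ici 0))
    (hσ : RightLocConst σ) {a b : ℝ} (ha : 0 ≤ a) (hb : 0 ≤ b) :
    IntervalIntegrable (fun s => f (x s) (σ s)) volume a b := by
  have h1 : (fun s => f (x s) (σ s)) =
      fun s => ∑ γ : Fin m, (σ ⁻¹' {γ}).indicator (fun s => f (x s) γ) s := by
    ext1 s
    rw [Finset.sum_eq_single (σ s)]
    · simp
    · intro γ _ hγ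
      simp [Set.indicator, hγ.symm]
    · simp
  rw [h1]
  have h2 : ∀ γ : Fin m, IntervalIntegrable (fun s => f (x s) γ) volume a b := by
    intro γ
    apply ContinuousOn.intervalIntegrable
    apply (hf γ).comp_continuousOn
    apply hx.mono
    intro u hu
    exact (le_min ha hb).trans hu.1
  have h3 : ∀ γ : Fin m, IntervalIntegrable
      ((σ ⁻¹' {γ}).indicator (fun s => f (x s) γ)) volume a b := by
    intro γ
    have hm : MeasurableSet (σ ⁻¹' {γ}) := aux_meas hσ (measurableSet_singleton γ)
    exact ⟨(h2 γ).1.indicator hm, (h2 γ).2.indicator hm⟩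
  have := IntervalIntegrable.sum (μ := volume) (a := a) (b := b) Finset.univ
    (f := fun γ => (σ ⁻¹' {γ}).indicator (fun s => f (x s) γ)) (fun γ _ => h3 γ)
  have e : (fun s => ∑ γ : Fin m, (σ ⁻¹' {γ}).indicator (fun s => f (x s) γ) s) =
      ∑ γ : Fin m, (σ ⁻¹' {γ}).indicator (fun s => f (x s) γ) := by
    ext1 s
    rw [Finset.sum_apply]
  rw [e]
  exact this

theorem aux_diff {n m : ℕ}
    {f : EuclideanSpace ℝ (Fin n) → Fin m → EuclideanSpace ℝ (Fin n)}
    (hf : ∀ γ : Fin m, Continuous (fun ξ => f ξ γ))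
    {x : ℝ → EuclideanSpace ℝ (Fin n)} {σ : ℝ → Fin m} (hx : IsTrajectory f x σ)
    (hσ : RightLocConst σ) {a b : ℝ} (ha : 0 ≤ a) (hb : 0 ≤ b) :
    x b - x a = ∫ s in a..b, f (x s) (σ s) := by
  rw [hx.2 a ha, hx.2 b hb, add_sub_add_left_eq_sub]
  exact intervalIntegral.integral_interval_sub_left (aux_int hf hx.1 hσ le_rfl hb)
    (aux_int hf hx.1 hσ le_rfl ha)

theorem aux_est {n m : ℕ}
    {f : EuclideanSpace ℝ (Fin n) → Fin m → EuclideanSpace ℝ (Fin n)}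
    (hf : ∀ γ : Fin m, Continuous (fun ξ => f ξ γ))
    {x : ℝ → EuclideanSpace ℝ (Fin n)} {σ : ℝ → Fin m} (hx : IsTrajectory f x σ)
    (hσ : RightLocConst σ) {a b : ℝ} (ha : 0 ≤ a) (hab : a ≤ b) {c : EuclideanSpace ℝ (Fin n)}
    {ε : ℝ} (h : ∀ s, a ≤ s → s < b → ‖f (x s) (σ s) - c‖ ≤ ε) :
    ‖x b - x a - (b - a) • c‖ ≤ ε * (b - a) := by
  rw [aux_diff hf hx hσ ha (ha.trans hab), ← intervalIntegral.integral_const,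
    ← intervalIntegral.integral_sub (aux_int hf hx.1 hσ ha (ha.trans hab)) (by simp)]
  rw [← abs_of_nonneg (sub_nonneg.2 hab)]
  apply intervalIntegral.norm_integral_le_of_norm_le_const_ae
  have : ∀ᵐ s : ℝ, s ≠ b := by simp [ae_iff, measure_singleton]
  filter_upwards [this] with s hs hs'
  rw [uIoc_of_le hab] at hs'
  exact h s hs'.1.le (lt_of_le_of_ne hs'.2 hs)

theorem aux_rd {E : Type*} [NormedAddCommGroup E] [NormedSpace ℝ E] {y : ℝ → E} {c : E} {t : ℝ}
    (h : ∀ ε > 0, ∃ δ > 0, ∀ b, t < b → b < t + δ → ‖y b - y t - (b - t) • c‖ ≤ ε * (b - t)) :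
    HasDerivWithinAt y c (Ici t) t := by
  rw [hasDerivWithinAt_iff_isLittleO, Asymptotics.isLittleO_iff]
  intro ε hε
  obtain ⟨δ, hδ, h⟩ := h ε hε
  have h1 : Iio (t + δ) ∈ nhdsWithin t (Ici t) := mem_nhdsWithin_of_mem_nhds
    (Iio_mem_nhds (by linarith))
  filter_upwards [h1, self_mem_nhdsWithin] with b hb hb'
  rcases eq_or_lt_of_le (show t ≤ b from hb') with h2 | h2
  · subst h2; simp
  · rw [Real.norm_of_nonneg (by linarith)]
    exact h b h2 hb

theorem aux_deriv {n m : ℕ}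
    {f : EuclideanSpace ℝ (Fin n) → Fin m → EuclideanSpace ℝ (Fin n)}
    (hf : ∀ γ : Fin m, Continuous (fun ξ => f ξ γ))
    {x : ℝ → EuclideanSpace ℝ (Fin n)} {σ : ℝ → Fin m} (hx : IsTrajectory f x σ)
    (hσ : RightLocConst σ) {t : ℝ} (ht : 0 ≤ t) :
    HasDerivWithinAt x (f (x t) (σ t)) (Ici t) t := by
  apply aux_rd
  intro ε hε
  obtain ⟨η, hη, hc⟩ := hσ t
  have h1 : ContinuousWithinAt (fun s => f (x s) (σ t)) (Ici t) t :=
    (hf (σ t)).continuousAt.comp_continuousWithinAt ((hx.1 t ht).mono (Ici_subset_Ici.2 ht))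
  rw [Metric.continuousWithinAt_iff] at h1
  obtain ⟨δ, hδ, h1⟩ := h1 ε hε
  refine ⟨min η δ, lt_min hη hδ, fun b hb hb' => ?_⟩
  apply aux_est hf hx hσ ht hb.le
  intro s hs hsb
  have hm1 := min_le_left η δ
  have hm2 := min_le_right η δ
  rw [hc s hs (by linarith), ← dist_eq_norm]
  apply (h1 hs _).le
  rw [Real.dist_eq, abs_of_nonneg (by linarith)]
  linarith

theorem aux_anti {n m : ℕ}
    {f : EuclideanSpace ℝ (Fin n) → Fin m → EuclideanSpace ℝ (Fin n)}
    (hf : ∀ γ : Fin m, Continuous (fun ξ => f ξ γ))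
    {χ : Fin m → Set (EuclideanSpace ℝ (Fin n))}
    {x : ℝ → EuclideanSpace ℝ (Fin n)} {σ : ℝ → Fin m} (hx : IsTrajectory f x σ)
    (hσ : RightLocConst σ) (hχ : InTchi χ x σ)
    {V : EuclideanSpace ℝ (Fin n) → Fin m → ℝ}
    (hV1 : ∀ γ : Fin m, ContDiff ℝ 1 (fun ξ => V ξ γ))
    (hV2 : ∀ ξ, ∀ γ : Fin m, ξ ∈ χ γ → fderiv ℝ (fun ζ => V ζ γ) ξ (f ξ γ) ≤ 0)
    {a b : ℝ} (ha : 0 ≤ a) (hab : a ≤ b) {γ : Fin m} (hc : ∀ s, a ≤ s → s < b → σ s = γ) :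
    V (x b) γ ≤ V (x a) γ := by
  have hd : ∀ t ∈ Ico a b, HasDerivWithinAt (fun t => V (x t) γ)
      (fderiv ℝ (fun ζ => V ζ γ) (x t) (f (x t) γ)) (Ici t) t := by
    intro t ht
    have h1 := aux_deriv hf hx hσ (ha.trans ht.1)
    rw [hc t ht.1 ht.2] at h1
    exact (((hV1 γ).differentiable (by simp)) (x t)).hasFDerivAt.comp_hasDerivWithinAt t h1
  refine image_le_of_deriv_right_le_deriv_boundary (f := fun t => V (x t) γ)
    (B := fun _ => V (x a) γ) (B' := fun _ => 0) ?_ hd le_rfl continuousOn_const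
    (fun t _ => hasDerivWithinAt_const _ _ _) ?_ (right_mem_Icc.2 hab)
  · exact (hV1 γ).continuous.comp_continuousOn
      (hx.1.mono fun u hu => ha.trans hu.1)
  · intro t ht
    apply hV2
    have := hχ t (ha.trans ht.1)
    rwa [hc t ht.1 ht.2] at this

theorem aux_TV {n m : ℕ}
    {f : EuclideanSpace ℝ (Fin n) → Fin m → EuclideanSpace ℝ (Fin n)}
    (hf : ∀ γ : Fin m, Continuous (fun ξ => f ξ γ))
    {χ : Fin m → Set (EuclideanSpace ℝ (Fin n))}
    {T' : Set ((ℝ → EuclideanSpace ℝ (Fin n)) × (ℝ → Fin m))}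
    {V : EuclideanSpace ℝ (Fin n) → Fin m → ℝ}
    (hV : IsWeakLyap f χ T' V) {p} (hp : p ∈ T')
    (hx : IsTrajectory f p.1 p.2) (hχ : InTchi χ p.1 p.2)
    {τD : ℝ} {N₀ : ℕ} (hτ : 0 < τD) (hσ : IsSwitchingSignal p.2 τD N₀) :
    InTV Set.univ V p.1 p.2 := by
  refine ⟨fun _ _ => mem_univ _, fun t t' ht htt' hst => ?_⟩
  obtain ⟨x, σ⟩ := p
  simp only at hx hχ hσ hst ⊢
  obtain ⟨hV1, -, hV2, hV3⟩ := hV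
  have hfin : ∀ t, (SwitchTimes σ ∩ Ioc 0 t).Finite := fun t =>
    (aux_fin hτ hσ (t + 1)).subset fun u hu => ⟨hu.1, hu.2.1, by linarith [hu.2.2]⟩
  have hlast : ∀ t, 0 ≤ t → ∃ s ∈ insert (0:ℝ) (SwitchTimes σ), 0 ≤ s ∧ s ≤ t ∧
      ∀ u ∈ Ioc s t, u ∉ SwitchTimes σ := by
    intro t ht
    obtain ⟨s, hs, hmax⟩ := Set.exists_max_image (insert (0:ℝ) (SwitchTimes σ ∩ Ioc 0 t)) id
      ((hfin t).insert 0) ⟨0, mem_insert _ _⟩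
    have h0 : 0 ≤ s := hmax 0 (mem_insert _ _)
    refine ⟨s, ?_, h0, ?_, ?_⟩
    · rcases hs with h | h
      · exact Or.inl h
      · exact Or.inr h.1
    · rcases hs with h | h
      · rw [h]; exact ht
      · exact h.2.2
    · intro u hu hus
      have : u ≤ s := hmax u (Or.inr ⟨hus, by linarith [hu.1], hu.2⟩)
      linarith [hu.1]
  by_cases hsw : ∃ u ∈ Ioc t t', u ∈ SwitchTimes σ
  · obtain ⟨s, hs, hs0, hst1, hsn⟩ := hlast t ht
    obtain ⟨s', hs', hs'0, hst', hsn'⟩ := hlast t' (ht.trans htt')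
    obtain ⟨s'', hs'', hmin⟩ := Set.exists_min_image (SwitchTimes σ ∩ Ioc t t') id
      ((hfin t').subset fun u hu => ⟨hu.1, by linarith [hu.2.1], hu.2.2⟩)
      (by obtain ⟨u, hu, hu'⟩ := hsw; exact ⟨u, hu', hu⟩)
    have h1 : s'' ≤ s' := by
      by_contra h
      push Not at h
      exact hsn' s'' ⟨h, hs''.2.2⟩ hs''.1
    have h2 : s' ∈ SwitchTimes σ := by
      rcases hs' with h | h
      · linarith [hs''.2.1]
      · exact h
    have hts'' := hs''.2.1
    have hnone : ∀ u ∈ Ioo s s'', u ∉ SwitchTimes σ := by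
      intro u hu hus
      rcases le_or_gt u t with h | h
      · exact hsn u ⟨hu.1, h⟩ hus
      · have : s'' ≤ u := hmin u ⟨hus, h, hu.2.le.trans hs''.2.2⟩
        linarith [hu.2]
    have hconst : ∀ u, s ≤ u → u < s'' → σ u = σ s := by
      intro u hu hu'
      exact aux_const hσ.1 hs0 (b := u) (fun w hw => hnone w ⟨hw.1, by linarith [hw.2]⟩) u ⟨hu, le_rfl⟩
    have hst2 : σ t = σ s := hconst t hst1 hts''
    have hc' : ∀ u ∈ Icc s' t', σ u = σ s' := aux_const hσ.1 hs'0 hsn'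
    have hst3 : σ t' = σ s' := hc' t' ⟨hst', le_rfl⟩
    have e1 := hV3 _ hp s s'' s' hs hs''.1 h2 (by linarith) hnone (by linarith)
      (hst2.symm.trans (hst.trans hst3))
    simp only at e1
    have e2 : V (x s'') (σ s) ≤ V (x t) (σ s) := aux_anti hf hx hσ.1 hχ hV1 hV2 ht hts''.le
      (fun u hu hu' => hconst u (by linarith) hu')
    have e3 : V (x t') (σ s') ≤ V (x s') (σ s') := aux_anti hf hx hσ.1 hχ hV1 hV2 hs'0 hst'
      (fun u hu hu' => hc' u ⟨hu, hu'.le⟩)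
    rw [hst3, hst2]
    linarith
  · push Not at hsw
    have := aux_const hσ.1 ht hsw
    rw [← hst]
    exact aux_anti hf hx hσ.1 hχ hV1 hV2 ht htt' (fun s h1 h2 => this s ⟨h1, h2.le⟩)

theorem aux_shift {n m : ℕ}
    {f : EuclideanSpace ℝ (Fin n) → Fin m → EuclideanSpace ℝ (Fin n)}
    (hf : ∀ γ : Fin m, Continuous (fun ξ => f ξ γ))
    {x : ℝ → EuclideanSpace ℝ (Fin n)} {σ : ℝ → Fin m} (hx : IsTrajectory f x σ)
    (hσ : RightLocConst σ) {c : ℝ} (hc : 0 ≤ c) :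
    IsTrajectory f (fun t => x (c + t)) (fun t => σ (c + t)) := by
  constructor
  · apply hx.1.comp (by fun_prop)
    intro t ht
    exact add_nonneg hc ht
  · intro t ht
    have h1 := aux_diff hf hx hσ (a := c + 0) (b := c + t) (by linarith) (by linarith)
    rw [intervalIntegral.integral_comp_add_left (fun s => f (x s) (σ s)) c, ← h1]
    simp

theorem aux_shift_sw {Γ : Type*} {σ : ℝ → Γ} {τD : ℝ} {N₀ : ℕ}
    (h : IsSwitchingSignal σ τD N₀) {c : ℝ} (hc : 0 ≤ c) :
    IsSwitchingSignal (fun t => σ (c + t)) τD N₀ := by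
  constructor
  · intro s
    obtain ⟨ε, hε, h1⟩ := h.1 (c + s)
    exact ⟨ε, hε, fun u hu hu' => h1 _ (by linarith) (by linarith)⟩
  · intro a b ha hab
    have h1 := h.2 (c + a) (c + b) (by linarith) (by linarith)
    have h2 : Nat.card ↥(SwitchTimes (fun t => σ (c + t)) ∩ Ioo a b) =
        Nat.card ↥(SwitchTimes σ ∩ Ioo (c + a) (c + b)) := by
      have : SwitchTimes σ ∩ Ioo (c + a) (c + b) =
          (fun t => c + t) '' (SwitchTimes (fun t => σ (c + t)) ∩ Ioo a b) := by
        ext w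
        constructor
        · rintro ⟨hw, hw1, hw2⟩
          refine ⟨w - c, ⟨⟨by linarith, fun ε hε => ?_⟩, by linarith, by linarith⟩, by ring⟩
          obtain ⟨u, hu1, hu2, hu3⟩ := hw.2 ε hε
          refine ⟨u - c, by linarith, by linarith, by simpa using hu3⟩
        · rintro ⟨s, ⟨hs, hs1, hs2⟩, rfl⟩
          refine ⟨⟨by simp only; linarith, fun ε hε => ?_⟩, by simp only; linarith, by simp only; linarith⟩
          obtain ⟨u, hu1, hu2, hu3⟩ := hs.2 ε hε
          refine ⟨c + u, by simp only; linarith, by simp only; linarith, hu3⟩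
      rw [this]
      exact (Nat.card_image_of_injective (add_right_injective c) _).symm
    rw [h2]
    convert h1 using 3
    ring

theorem aux_kinf {α₁ α₂ : ℝ → ℝ} (h1 : IsKinf α₁) (h2 : IsKinf α₂) :
    ∃ β : ℝ → ℝ, IsKinf β ∧ (∀ r, 0 ≤ r → r ≤ β r) ∧
      ∀ r ρ, 0 ≤ r → 0 ≤ ρ → α₁ ρ ≤ α₂ r → ρ ≤ β r := by
  obtain ⟨c1, m1, z1, t1⟩ := h1
  obtain ⟨c2, m2, z2, t2⟩ := h2
  have p1 : ∀ r, 0 ≤ r → 0 ≤ α₁ r := fun r hr => by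
    rw [← z1]; exact m1.monotoneOn self_mem_Ici hr hr
  have p2 : ∀ r, 0 ≤ r → 0 ≤ α₂ r := fun r hr => by
    rw [← z2]; exact m2.monotoneOn self_mem_Ici hr hr
  set A : ℝ → ℝ := fun r => α₁ (max r 0) + min r 0 with hA
  have Apos : ∀ r, 0 ≤ r → A r = α₁ r := fun r hr => by simp [hA, hr]
  have Aneg : ∀ r, r ≤ 0 → A r = r := fun r hr => by simp [hA, hr, z1]
  have Ac : Continuous A := by fun_prop
  have Am : StrictMono A := by
    intro r s hrs
    rcases le_or_gt 0 r with h | h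
    · rw [Apos r h, Apos s (by linarith)]
      exact m1 h (show (0:ℝ) ≤ s by linarith) hrs
    · rw [Aneg r h.le]
      rcases le_or_gt 0 s with h' | h'
      · rw [Apos s h']; linarith [p1 s h']
      · rw [Aneg s h'.le]; exact hrs
  have At : Tendsto A atTop atTop := by
    refine t1.congr' ?_
    filter_upwards [eventually_ge_atTop 0] with r hr
    rw [Apos r hr]
  have Ab : Tendsto A atBot atBot := by
    refine tendsto_id.congr' ?_
    filter_upwards [eventually_le_atBot 0] with r hr
    rw [Aneg r hr]; rfl
  have As : Function.Surjective A := Ac.surjective At Ab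
  set e := Am.orderIsoOfSurjective A As with he
  have hee : ∀ r, e r = A r := fun r => rfl
  have hsymm : ∀ r, 0 ≤ r → e.symm (α₁ r) = r := fun r hr => by
    rw [← Apos r hr, ← hee, e.symm_apply_apply]
  have key : ∀ r, 0 ≤ r → ∀ ρ, 0 ≤ ρ → α₁ ρ ≤ α₁ r + α₂ r → ρ ≤ e.symm (α₁ r + α₂ r) := by
    intro r hr ρ hρ h
    rw [← hsymm ρ hρ]
    exact e.symm.monotone h
  refine ⟨fun r => e.symm (α₁ r + α₂ r), ⟨?_, ?_, ?_, ?_⟩, ?_, ?_⟩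
  · exact e.symm.continuous.comp (c1.add c2)
  · intro r hr s hs hrs
    exact e.symm.strictMono (add_lt_add (m1 hr hs hrs) (m2 hr hs hrs))
  · have := hsymm 0 le_rfl
    rw [z1] at this
    simp only [z1, z2, add_zero]
    exact this
  · exact e.symm.tendsto_atTop.comp (t1.atTop_add_atTop t2)
  · intro r hr
    exact key r hr r hr (by linarith [p2 r hr])
  · intro r ρ hr hρ h
    exact key r hr ρ hρ (by linarith [p1 r hr])

theorem aux_kinf_nonneg {β : ℝ → ℝ} (h : IsKinf β) {r : ℝ} (hr : 0 ≤ r) : 0 ≤ β r := by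
  rw [← h.2.2.1]; exact h.2.1.monotoneOn self_mem_Ici hr hr

theorem aux_kinf_iter {β : ℝ → ℝ} (h : IsKinf β) (k : ℕ) : IsKinf (β^[k]) := by
  induction k with
  | zero =>
    exact ⟨continuous_id, strictMonoOn_id, rfl, tendsto_id⟩
  | succ k ih =>
    rw [Function.iterate_succ']
    refine ⟨h.1.comp ih.1, ?_, ?_, h.2.2.2.comp ih.2.2.2⟩
    · intro r hr s hs hrs
      exact h.2.1 (aux_kinf_nonneg ih hr) (aux_kinf_nonneg ih hs) (ih.2.1 hr hs hrs)
    · simp only [Function.comp, ih.2.2.1, h.2.2.1]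

theorem aux_stab {n m : ℕ}
    {χ : Fin m → Set (EuclideanSpace ℝ (Fin n))}
    {V : EuclideanSpace ℝ (Fin n) → Fin m → ℝ} {α₁ α₂ β : ℝ → ℝ}
    (hV : ∀ ξ, ∀ γ : Fin m, ξ ∈ χ γ → α₁ ‖ξ‖ ≤ V ξ γ ∧ V ξ γ ≤ α₂ ‖ξ‖)
    (hβ : IsKinf β) (hβ1 : ∀ r, 0 ≤ r → r ≤ β r)
    (hβ2 : ∀ r ρ, 0 ≤ r → 0 ≤ ρ → α₁ ρ ≤ α₂ r → ρ ≤ β r)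
    {x : ℝ → EuclideanSpace ℝ (Fin n)} {σ : ℝ → Fin m} (hx : ContinuousOn x (Ici 0))
    (hσ : RightLocConst σ) (hχ : InTchi χ x σ) (hTV : InTV Set.univ V x σ)
    {t₀ : ℝ} (ht₀ : 0 ≤ t₀) (k : ℕ) : ∀ t, t₀ ≤ t → (σ '' Icc t₀ t).ncard ≤ k →
      ‖x t‖ ≤ β^[k] ‖x t₀‖ := by
  have step : ∀ s t, t₀ ≤ s → s ≤ t → σ s = σ t → ‖x t‖ ≤ β ‖x s‖ := by
    intro s t hs hst he
    apply hβ2 _ _ (norm_nonneg _) (norm_nonneg _)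
    have h1 := hTV.2 s t (by linarith) hst he
    have h2 := (hV _ _ (hχ t (by linarith))).1
    have h3 := (hV _ _ (hχ s (by linarith))).2
    linarith
  induction k with
  | zero =>
    intro t ht hc
    have h1 : (σ '' Icc t₀ t) = ∅ := (Set.ncard_eq_zero (Set.toFinite _)).1 (by omega)
    have : σ t ∈ σ '' Icc t₀ t := ⟨t, ⟨ht, le_rfl⟩, rfl⟩
    rw [h1] at this
    exact this.elim
  | succ k ih =>
    intro t ht hc
    rw [Function.iterate_succ_apply']
    have hnn : 0 ≤ β^[k] ‖x t₀‖ := aux_kinf_nonneg (aux_kinf_iter hβ k) (norm_nonneg _)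
    set S : Set ℝ := {u | u ∈ Icc t₀ t ∧ σ u = σ t} with hS
    have hne : S.Nonempty := ⟨t, ⟨ht, le_rfl⟩, rfl⟩
    have hbdd : BddBelow S := ⟨t₀, fun u hu => hu.1.1⟩
    set s := sInf S with hs_def
    have hs0 : t₀ ≤ s := le_csInf hne fun u hu => hu.1.1
    have hst : s ≤ t := csInf_le hbdd ⟨⟨ht, le_rfl⟩, rfl⟩
    have hsσ : σ s = σ t := by
      obtain ⟨ε, hε, hc⟩ := hσ s
      obtain ⟨u, hu, hus⟩ := exists_lt_of_csInf_lt hne (show sInf S < s + ε by linarith)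
      rw [← hc u (csInf_le hbdd hu) hus, hu.2]
    have hlt : ∀ u, t₀ ≤ u → u < s → σ u ≠ σ t := by
      intro u h1 h2 h3
      exact absurd (csInf_le hbdd (show u ∈ S from ⟨⟨h1, by linarith⟩, h3⟩)) (not_le.2 h2)
    have hmono := hβ.2.1.monotoneOn
    have hxs : ‖x s‖ ≤ β^[k] ‖x t₀‖ := by
      rcases eq_or_lt_of_le hs0 with h | h
      · rw [← h]
        clear hc ih hnn
        induction k with
        | zero => exact le_rfl
        | succ k ih =>
          rw [Function.iterate_succ_apply']
          exact ih.trans (hβ1 _ ((norm_nonneg _).trans ih))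
      · have hu : ∀ u ∈ Ico t₀ s, ‖x u‖ ≤ β^[k] ‖x t₀‖ := by
          intro u hu
          apply ih u hu.1
          have hss : σ '' Icc t₀ u ⊂ σ '' Icc t₀ t := by
            refine ⟨image_mono (Icc_subset_Icc_right (by linarith [hu.2])), fun hsub => ?_⟩
            obtain ⟨w, hw, hw'⟩ := hsub (show σ t ∈ _ from ⟨t, ⟨ht, le_rfl⟩, rfl⟩)
            exact hlt w hw.1 (by linarith [hw.2, hu.2]) hw'
          have := Set.ncard_lt_ncard hss (Set.toFinite _)
          omega
        have hcont : ContinuousWithinAt (fun u => ‖x u‖) (Ico t₀ s) s :=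
          ((hx s (show (0:ℝ) ≤ s by linarith)).mono (fun w hw => ht₀.trans hw.1)).norm
        have hmem : (nhdsWithin s (Ico t₀ s)).NeBot := by
          rw [← mem_closure_iff_nhdsWithin_neBot, closure_Ico h.ne]
          exact ⟨hs0, le_rfl⟩
        exact le_of_tendsto hcont (eventually_nhdsWithin_of_forall hu)
    exact (step s t hs0 hst hsσ).trans (hmono (norm_nonneg _) hnn hxs)

theorem aux_ultra {ι X : Type*} [TopologicalSpace X] (U : Ultrafilter ι) {K : Set X}
    (hK : IsCompact K) {g : ι → X} (h : ∀ᶠ k in (U : Filter ι), g k ∈ K) :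
    ∃ y, Tendsto g U (nhds y) := by
  obtain ⟨y, -, hy⟩ := hK.ultrafilter_le_nhds (U.map g) (le_principal_iff.2 h)
  exact ⟨y, hy⟩

theorem aux_limit {n m : ℕ}
    {f : EuclideanSpace ℝ (Fin n) → Fin m → EuclideanSpace ℝ (Fin n)}
    (hf : ∀ γ : Fin m, Continuous (fun ξ => f ξ γ))
    {χ : Fin m → Set (EuclideanSpace ℝ (Fin n))} (hχcl : ∀ γ, IsClosed (χ γ))
    {V : EuclideanSpace ℝ (Fin n) → Fin m → ℝ} (hVc : ∀ γ, Continuous (fun ξ => V ξ γ))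
    {x : ℝ → EuclideanSpace ℝ (Fin n)} {σ : ℝ → Fin m} (hx : IsTrajectory f x σ)
    (hχ : InTchi χ x σ) (hTV : InTV Set.univ V x σ)
    {τD : ℝ} {N₀ : ℕ} (hτ : 0 < τD) (hσ : IsSwitchingSignal σ τD N₀)
    {R : ℝ} (hR : ∀ t, 0 ≤ t → ‖x t‖ ≤ R)
    {ts : ℕ → ℝ} (hts : Tendsto ts atTop atTop) :
    ∃ (y : ℝ → EuclideanSpace ℝ (Fin n)) (ς : ℝ → Fin m) (U : Ultrafilter ℕ),
      Tendsto (fun k => x (ts k)) U (nhds (y 0)) ∧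
      IsTrajectory f y ς ∧ InTchi χ y ς ∧ InTVstar Set.univ V y ς ∧
      ∃ τD : ℝ, 0 < τD ∧ ∃ N₀ : ℕ, IsSwitchingSignal ς τD N₀ := by
  obtain ⟨N, hNm, hNc, hNb⟩ := aux_N hτ hσ
  set U : Ultrafilter ℕ := Filter.hyperfilter ℕ with hU
  have hUle : (U : Filter ℕ) ≤ atTop := Nat.hyperfilter_le_atTop
  have htU : Tendsto ts U atTop := hts.mono_left hUle
  have hpos : ∀ t : ℝ, ∀ᶠ k in (U : Filter ℕ), 0 ≤ ts k + t := fun t => by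
    filter_upwards [htU.eventually_ge_atTop (-t)] with k hk
    linarith
  have hpos0 : ∀ᶠ k in (U : Filter ℕ), 0 ≤ ts k := htU.eventually_ge_atTop 0
  -- limits
  have hy : ∀ t : ℝ, ∃ y, Tendsto (fun k => x (ts k + t)) U (nhds y) := fun t => by
    refine aux_ultra U (isCompact_closedBall 0 R) ?_
    filter_upwards [hpos t] with k hk
    simpa using hR _ hk
  choose y hy using hy
  have hs : ∀ t : ℝ, ∃ γ, ∀ᶠ k in (U : Filter ℕ), σ (ts k + t) = γ := fun t => by
    obtain ⟨γ, hγ⟩ := aux_ultra U (isCompact_univ) (g := fun k => σ (ts k + t))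
      (Eventually.of_forall fun _ => mem_univ _)
    rw [nhds_discrete, tendsto_pure] at hγ
    exact ⟨γ, hγ⟩
  choose s hs using hs
  have hN : ∀ t : ℝ, ∃ j : ℤ, ∀ᶠ k in (U : Filter ℕ), N (ts k + t) - N (ts k) = j := fun t => by
    obtain ⟨C, hC⟩ := exists_nat_gt ((N₀ : ℝ) + (|t| + 1) / τD)
    obtain ⟨γ, hγ⟩ := aux_ultra U (isCompact_Icc (a := -(C:ℤ)) (b := (C:ℤ)))
      (g := fun k => N (ts k + t) - N (ts k)) (by
        filter_upwards [hpos t, hpos0] with k hk hk0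
        rcases le_total 0 t with h | h
        · have h1 := hNb (ts k) (ts k + t) hk0 (by linarith)
          have h2 := hNm (show ts k ≤ ts k + t by linarith)
          rw [abs_of_nonneg h] at hC
          have h3 : ts k + t - ts k + 1 = t + 1 := by ring
          rw [h3] at h1
          have h4 : ((N (ts k + t) - N (ts k) : ℤ) : ℝ) < ((C : ℤ) : ℝ) := by
            push_cast; linarith
          have h5 := Int.cast_lt.1 h4
          constructor <;> omega
        · have h1 := hNb (ts k + t) (ts k) hk (by linarith)
          have h2 := hNm (show ts k + t ≤ ts k by linarith)
          rw [abs_of_nonpos h] at hC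
          have h3 : ts k - (ts k + t) + 1 = -t + 1 := by ring
          rw [h3] at h1
          have h4 : ((N (ts k) - N (ts k + t) : ℤ) : ℝ) < ((C : ℤ) : ℝ) := by
            push_cast; linarith
          have h5 := Int.cast_lt.1 h4
          constructor <;> omega)
    rw [nhds_discrete, tendsto_pure] at hγ
    exact ⟨γ, hγ⟩
  choose M hM using hN
  have hMm : Monotone M := by
    intro a b hab
    obtain ⟨k, h1, h2⟩ := ((hM a).and (hM b)).exists
    have := hNm (show ts k + a ≤ ts k + b by linarith)
    omega
  have hMb : ∀ a b, a ≤ b → (M b - M a : ℝ) ≤ N₀ + (b - a + 1) / τD := by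
    intro a b hab
    obtain ⟨k, h1, h2, h3⟩ := ((hM a).and ((hM b).and (hpos a))).exists
    have h4 := hNb (ts k + a) (ts k + b) h3 (by linarith)
    have h5 : ts k + b - (ts k + a) + 1 = b - a + 1 := by ring
    rw [h5] at h4
    rw [← h1, ← h2]
    push_cast
    linarith
  have hMc : ∀ a b, a ≤ b → M a = M b → ∀ᶠ k in (U : Filter ℕ),
      ∀ u ∈ Icc (ts k + a) (ts k + b), σ u = s a := by
    intro a b hab hMab
    filter_upwards [hM a, hM b, hpos a, hs a] with k h1 h2 h3 h4
    intro u hu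
    rw [← h4]
    exact hNc _ _ h3 (by linarith) (by omega) u hu
  have hMs : ∀ a b, a ≤ b → M a = M b → s b = s a := by
    intro a b hab hMab
    obtain ⟨k, h1, h2⟩ := ((hMc a b hab hMab).and (hs b)).exists
    rw [← h2]
    exact h1 _ ⟨by linarith, le_rfl⟩
  -- right limits
  have hright : ∀ t : ℝ, ∃ η > 0, ∀ u, t < u → u < t + η → M u = M (t + η) := by
    intro t
    have hex : ∃ z : ℤ, (∃ η > 0, M (t + η) = z) ∧ ∀ z', (∃ η > 0, M (t + η) = z') → z ≤ z' := by
      apply Int.exists_least_of_bdd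
      · refine ⟨M t, ?_⟩
        rintro z ⟨η, hη, rfl⟩
        exact hMm (by linarith)
      · exact ⟨_, 1, one_pos, rfl⟩
    obtain ⟨z, ⟨η, hη, hz⟩, hmin⟩ := hex
    refine ⟨η, hη, fun u hu hu' => le_antisymm (hMm hu'.le) ?_⟩
    rw [hz]
    exact hmin _ ⟨u - t, by linarith, by congr 1; ring⟩
  choose η hη hMη using hright
  set P : ℝ → ℤ := fun t => M (t + η t) with hP
  set ς : ℝ → Fin m := fun t => s (t + η t) with hς
  have hςs : ∀ t u, t < u → u < t + η t → s u = ς t := fun t u h1 h2 =>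
    (hMs u (t + η t) h2.le (hMη t u h1 h2)).symm
  have hςeq : ∀ t t' u, t < u → u < t + η t → t' < u → u < t' + η t' → ς t = ς t' := by
    intro t t' u h1 h2 h3 h4
    rw [← hςs t u h1 h2, hςs t' u h3 h4]
  have hςr : ∀ t u, t ≤ u → u < t + η t → ς u = ς t := by
    intro t u h1 h2
    have h3 := hη u
    have h4 : u < min (t + η t) (u + η u) := lt_min h2 (by linarith)
    obtain ⟨w, hw1, hw2⟩ := exists_between h4
    exact hςeq u t w hw1 (hw2.trans_le (min_le_right _ _)) (by linarith)
      (hw2.trans_le (min_le_left _ _))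
  have hRLC : RightLocConst ς := fun t => ⟨η t, hη t, hςr t⟩
  -- `P` strictly increases at switching times
  have hPle : ∀ t u, t < u → P t ≤ M u := by
    intro t u h
    have h4 : t < min (t + η t) u := lt_min (by linarith [hη t]) h
    obtain ⟨w, hw1, hw2⟩ := exists_between h4
    rw [hP]
    simp only
    rw [← hMη t w hw1 (hw2.trans_le (min_le_left _ _))]
    exact hMm (hw2.trans_le (min_le_right _ _)).le
  have hleP : ∀ t, M t ≤ P t := fun t => hMm (by linarith [hη t])
  have hPst : ∀ w, w ∈ SwitchTimes ς → ∀ u, u < w → P u < P w := by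
    intro w hw u huw
    by_contra hcon
    push Not at hcon
    obtain ⟨v, hv1, hv2, hv3⟩ := hw.2 (w - u) (by linarith)
    apply hv3
    have hv4 : u < v := by linarith
    have hcst : ∀ a, u < a → a < w + η w → s a = ς w := by
      intro a ha1 ha2
      have e1 := hPle u a ha1
      have e2 : M a ≤ M (w + η w) := hMm ha2.le
      exact (hMs a (w + η w) ha2.le (le_antisymm e2 (hcon.trans e1))).symm
    have h4 : v < min (v + η v) (w + η w) :=
      lt_min (by linarith [hη v]) (by linarith [hη w])
    obtain ⟨a, ha1, ha2⟩ := exists_between h4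
    rw [← hςs v a ha1 (ha2.trans_le (min_le_left _ _))]
    exact hcst a (by linarith) (ha2.trans_le (min_le_right _ _))
  have hSW : IsSwitchingSignal ς τD (N₀ + 1 + ⌈1 / τD⌉₊) := by
    refine ⟨hRLC, fun a b ha hab => ?_⟩
    rw [Nat.card_coe_set_eq]
    have h1 : (SwitchTimes ς ∩ Ioo a b).ncard ≤ (Set.Icc (M a) (M b)).ncard := by
      refine Set.ncard_le_ncard_of_injOn P ?_ ?_ (Set.finite_Icc _ _)
      · rintro w ⟨hw, hw1, hw2⟩
        exact ⟨(hMm hw1.le).trans (hleP w), hPle w b hw2⟩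
      · rintro w ⟨hw, -⟩ v ⟨hv, -⟩ hwv
        rcases lt_trichotomy w v with h | h | h
        · exact absurd hwv (hPst v hv w h).ne
        · exact h
        · exact absurd hwv (hPst w hw v h).ne'
    have h2 : ((Set.Icc (M a) (M b)).ncard : ℤ) = M b + 1 - M a := by
      rw [← Finset.coe_Icc, Set.ncard_coe_finset, Int.card_Icc_of_le]
      have := hMm hab.le
      omega
    have h3 : ((Set.Icc (M a) (M b)).ncard : ℝ) = M b + 1 - M a := by exact_mod_cast h2
    have h4 := hMb a b hab.le
    have h5 : ((SwitchTimes ς ∩ Ioo a b).ncard : ℝ) ≤ (Set.Icc (M a) (M b)).ncard := by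
      exact_mod_cast h1
    have h6 := Nat.le_ceil (1 / τD)
    rw [add_div] at h4
    push_cast
    linarith
  -- Lipschitz
  obtain ⟨L, hL0, hL⟩ : ∃ L : ℝ, 0 < L ∧ ∀ ξ γ, ‖ξ‖ ≤ R → ‖f ξ γ‖ ≤ L := by
    have : ∀ γ, ∃ C, ∀ ξ ∈ closedBall (0 : EuclideanSpace ℝ (Fin n)) R, ‖f ξ γ‖ ≤ C := fun γ =>
      (isCompact_closedBall 0 R).exists_bound_of_continuousOn (hf γ).continuousOn
    choose C hC using this
    refine ⟨1 + ∑ γ, |C γ|, by positivity, fun ξ γ hξ => ?_⟩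
    have h1 := hC γ ξ (by simpa using hξ)
    have h2 := Finset.single_le_sum (f := fun γ => |C γ|) (fun i _ => abs_nonneg _)
      (Finset.mem_univ γ)
    have h3 := le_abs_self (C γ)
    linarith
  have hLip : ∀ a b, 0 ≤ a → a ≤ b → ‖x b - x a‖ ≤ L * (b - a) := by
    intro a b ha hab
    have := aux_est hf hx hσ.1 ha hab (c := 0) (ε := L) (fun u hu _ => by
      rw [sub_zero]; exact hL _ _ (hR u (ha.trans hu)))
    simpa using this
  have hLipy : ∀ a b, a ≤ b → ‖y b - y a‖ ≤ L * (b - a) := by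
    intro a b hab
    refine le_of_tendsto ((hy b).sub (hy a)).norm ?_
    filter_upwards [hpos a] with k hk
    have := hLip _ (ts k + b) hk (by linarith)
    have e : ts k + b - (ts k + a) = b - a := by ring
    rwa [e] at this
  have hyc : Continuous y := by
    have : LipschitzWith ⟨L, hL0.le⟩ y := by
      apply LipschitzWith.of_dist_le_mul
      intro a b
      rw [dist_eq_norm, Real.dist_eq]
      rcases le_total a b with h | h
      · rw [norm_sub_rev, abs_sub_comm, abs_of_nonneg (sub_nonneg.2 h)]
        exact hLipy a b h
      · rw [abs_of_nonneg (sub_nonneg.2 h)]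
        exact hLipy b a h
    exact this.continuous
  have hytend : ∀ t, Tendsto y (nhdsWithin t (Ioi t)) (nhds (y t)) := fun t =>
    hyc.continuousAt.mono_left nhdsWithin_le_nhds
  have hev : ∀ t, ∀ᶠ u in nhdsWithin t (Ioi t), t < u ∧ u < t + η t := fun t => by
    have := hη t
    exact Ioo_mem_nhdsGT (by linarith)
  -- derivative
  have hder : ∀ t, HasDerivWithinAt y (f (y t) (ς t)) (Ici t) t := by
    intro t
    apply aux_rd
    intro ε hε
    have huc := (isCompact_closedBall (0 : EuclideanSpace ℝ (Fin n)) R).uniformContinuousOn_of_continuous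
      (hf (ς t)).continuousOn
    rw [Metric.uniformContinuousOn_iff] at huc
    obtain ⟨δ, hδ, huc⟩ := huc ε hε
    refine ⟨min (η t) (δ / L), lt_min (hη t) (by positivity), fun b hb hb' => ?_⟩
    have hb1 : b < t + η t := by linarith [min_le_left (η t) (δ / L)]
    have hb2 : b - t < δ / L := by linarith [min_le_right (η t) (δ / L)]
    rw [lt_div_iff₀ hL0] at hb2
    have key : ∀ a, t < a → a < b → ‖y b - y a - (b - a) • f (y a) (ς t)‖ ≤ ε * (b - a) := by
      intro a hta hab
      have hMab : M a = M b := by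
        rw [hMη t a hta (by linarith), hMη t b hb hb1]
      have hsa : s a = ς t := hςs t a hta (by linarith)
      refine le_of_tendsto ((((hy b).sub (hy a)).sub
        ((((hf (ς t)).tendsto (y a)).comp (hy a)).const_smul (b - a))).norm) ?_
      filter_upwards [hpos a, hMc a b hab.le hMab] with k hk hk2
      have e : ts k + b - (ts k + a) = b - a := by ring
      have := aux_est hf hx hσ.1 hk (b := ts k + b) (by linarith) (c := f (x (ts k + a)) (ς t)) (ε := ε)
        (fun u hu hu' => by
          rw [hk2 u ⟨hu, hu'.le⟩, hsa, ← dist_eq_norm]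
          refine (huc _ ?_ _ ?_ ?_).le
          · simpa using hR u (hk.trans hu)
          · simpa using hR _ hk
          · rw [dist_eq_norm]
            refine (hLip _ _ hk hu).trans_lt ?_
            nlinarith)
      rw [e] at this
      exact this
    have hcont : Tendsto (fun a => ‖y b - y a - (b - a) • f (y a) (ς t)‖) (nhdsWithin t (Ioi t))
        (nhds ‖y b - y t - (b - t) • f (y t) (ς t)‖) := by
      have hfy : Continuous (fun a => f (y a) (ς t)) := (hf (ς t)).comp hyc
      have : Continuous (fun a => ‖y b - y a - (b - a) • f (y a) (ς t)‖) := by fun_prop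
      exact this.continuousAt.mono_left nhdsWithin_le_nhds
    have hcont2 : Tendsto (fun a => ε * (b - a)) (nhdsWithin t (Ioi t)) (nhds (ε * (b - t))) := by
      have : Continuous (fun a => ε * (b - a)) := by fun_prop
      exact this.continuousAt.mono_left nhdsWithin_le_nhds
    refine le_of_tendsto_of_tendsto hcont hcont2 ?_
    filter_upwards [Ioo_mem_nhdsGT hb] with a ha
    exact key a ha.1 ha.2
  have hVle : ∀ a b, s a = s b → V (y a) (s a) ≤ V (y b) (s b) := by
    intro a b hab
    have ta : Tendsto (fun k => V (x (ts k + a)) (s a)) U (nhds (V (y a) (s a))) :=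
      ((hVc (s a)).tendsto (y a)).comp (hy a)
    have tb : Tendsto (fun k => V (x (ts k + b)) (s b)) U (nhds (V (y b) (s b))) :=
      ((hVc (s b)).tendsto (y b)).comp (hy b)
    refine ge_of_tendsto tb ?_
    filter_upwards [hs b, hpos b] with j hj hj0
    refine le_of_tendsto ta ?_
    filter_upwards [hs a, htU.eventually_ge_atTop (ts j + b - a)] with k hk hk'
    have := hTV.2 (ts j + b) (ts k + a) hj0 (by linarith) (by rw [hk, hj, hab])
    rwa [hk, hj] at this
  have hVeq : ∀ a b, ς a = ς b → V (y a) (ς a) ≤ V (y b) (ς b) := by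
    intro a b hab
    have ta : Tendsto (fun u => V (y u) (ς a)) (nhdsWithin a (Ioi a)) (nhds (V (y a) (ς a))) :=
      ((hVc (ς a)).tendsto (y a)).comp (hytend a)
    have tb : Tendsto (fun u => V (y u) (ς b)) (nhdsWithin b (Ioi b)) (nhds (V (y b) (ς b))) :=
      ((hVc (ς b)).tendsto (y b)).comp (hytend b)
    refine ge_of_tendsto tb ?_
    filter_upwards [hev b] with v hv
    refine le_of_tendsto ta ?_
    filter_upwards [hev a] with u hu
    have h1 := hςs a u hu.1 hu.2
    have h2 := hςs b v hv.1 hv.2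
    have := hVle u v (by rw [h1, h2, hab])
    rwa [h1, h2] at this
  refine ⟨y, ς, U, by simpa using hy 0, ⟨hyc.continuousOn, ?_⟩, ?_, ⟨⟨fun _ _ => mem_univ _, ?_⟩, ?_⟩,
    τD, hτ, _, hSW⟩
  · intro t ht
    have := intervalIntegral.integral_eq_sub_of_hasDeriv_right (a := 0) (b := t) hyc.continuousOn
      (fun u _ => (hder u).mono Ioi_subset_Ici_self)
      (aux_int hf hyc.continuousOn hRLC le_rfl ht)
    rw [this]
    abel
  · intro t ht
    refine (hχcl (ς t)).mem_of_tendsto (hytend t) ?_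
    filter_upwards [hev t] with u hu
    rw [← hςs t u hu.1 hu.2]
    refine (hχcl (s u)).mem_of_tendsto (hy u) ?_
    filter_upwards [hs u, hpos u] with k h1 h2
    rw [← h1]
    exact hχ _ h2
  · intro t t' _ _ h
    exact hVeq t' t h.symm
  · intro t t' _ _ h
    exact le_antisymm (hVeq t t' h) (hVeq t' t h.symm)

/-- asymptotic stability criterion: suppose `V` is a weak Lyapunov-like
function for `T'` (with `Ω = ℝⁿ`), every member of `T'` is a trajectory in
`𝒯[χ] ∩ 𝒯_a`, `f(0,γ) = 0` for all `γ ∈ Γ* = {γ : 0 ∈ χ_γ}`, and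
`M = {0} × Γ*` is the maximal weakly-invariant set with respect to
`𝒯_V^* ∩ 𝒯[χ] ∩ 𝒯_a`. Then `T'` is globally asymptotically stable: uniformly stable
and every state trajectory converges to `0`. -/
theorem stmt16 {n m : ℕ}
    (f : EuclideanSpace ℝ (Fin n) → Fin m → EuclideanSpace ℝ (Fin n))
    (hf : ∀ γ : Fin m, Continuous (fun ξ => f ξ γ))
    (χ : Fin m → Set (EuclideanSpace ℝ (Fin n)))
    (hχcl : ∀ γ, IsClosed (χ γ)) (hχcov : (⋃ γ, χ γ) = Set.univ)
    (hf0 : ∀ γ : Fin m, (0 : EuclideanSpace ℝ (Fin n)) ∈ χ γ → f 0 γ = 0)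
    (T' : Set ((ℝ → EuclideanSpace ℝ (Fin n)) × (ℝ → Fin m)))
    (hT' : ∀ p ∈ T', IsTrajectory f p.1 p.2 ∧ InTchi χ p.1 p.2 ∧
      ∃ τD : ℝ, 0 < τD ∧ ∃ N₀ : ℕ, IsSwitchingSignal p.2 τD N₀)
    (V : EuclideanSpace ℝ (Fin n) → Fin m → ℝ)
    (hV : IsWeakLyap f χ T' V)
    (hMinv : WeaklyInvariant
      {q | IsTrajectory f q.1 q.2 ∧ InTchi χ q.1 q.2 ∧
        InTVstar Set.univ V q.1 q.2 ∧
        ∃ τD : ℝ, 0 < τD ∧ ∃ N₀ : ℕ, IsSwitchingSignal q.2 τD N₀}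
      (({0} : Set (EuclideanSpace ℝ (Fin n))) ×ˢ
        {γ : Fin m | (0 : EuclideanSpace ℝ (Fin n)) ∈ χ γ}))
    (hMmax : ∀ M' : Set (EuclideanSpace ℝ (Fin n) × Fin m),
      WeaklyInvariant
        {q | IsTrajectory f q.1 q.2 ∧ InTchi χ q.1 q.2 ∧
          InTVstar Set.univ V q.1 q.2 ∧
          ∃ τD : ℝ, 0 < τD ∧ ∃ N₀ : ℕ, IsSwitchingSignal q.2 τD N₀} M' →
      M' ⊆ (({0} : Set (EuclideanSpace ℝ (Fin n))) ×ˢ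
        {γ : Fin m | (0 : EuclideanSpace ℝ (Fin n)) ∈ χ γ})) :
    (∃ α : ℝ → ℝ, IsKinf α ∧
      ∀ p ∈ T', ∀ t₀ t : ℝ, 0 ≤ t₀ → t₀ ≤ t → ‖p.1 t‖ ≤ α ‖p.1 t₀‖) ∧
    ∀ p ∈ T', Tendsto p.1 atTop (nhds 0) := by
  obtain ⟨α₁, α₂, hα₁, hα₂, hVα⟩ := hV.2.1
  obtain ⟨β, hβ, hβ1, hβ2⟩ := aux_kinf hα₁ hα₂
  have hstab : ∀ p ∈ T', ∀ t₀ t : ℝ, 0 ≤ t₀ → t₀ ≤ t → ‖p.1 t‖ ≤ β^[m] ‖p.1 t₀‖ := by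
    intro p hp t₀ t ht₀ ht
    obtain ⟨hx, hχ, τD, hτ, N₀, hσ⟩ := hT' p hp
    refine aux_stab hVα hβ hβ1 hβ2 hx.1 hσ.1 hχ (aux_TV hf hV hp hx hχ hτ hσ) ht₀ m t ht ?_
    exact (Set.ncard_le_card _).trans (by simp)
  refine ⟨⟨β^[m], aux_kinf_iter hβ m, hstab⟩, ?_⟩
  intro p hp
  by_contra hcon
  obtain ⟨hx, hχ, τD, hτ, N₀, hσ⟩ := hT' p hp
  rw [Metric.tendsto_atTop] at hcon
  push Not at hcon
  obtain ⟨ε, hε, hcon⟩ := hcon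
  choose ts hts1 hts2 using fun k : ℕ => hcon k
  have hts : Tendsto ts atTop atTop := tendsto_atTop_mono hts1 tendsto_natCast_atTop_atTop
  obtain ⟨y, ς, U, hy0, hy, hyχ, hyV, τ', hτ', N', hς⟩ := aux_limit hf hχcl
    (fun γ => (hV.1 γ).continuous) hx hχ (aux_TV hf hV hp hx hχ hτ hσ) hτ hσ
    (R := β^[m] ‖p.1 0‖) (fun t ht => hstab p hp 0 t le_rfl ht) hts
  have hsub := hMmax {q | ∃ t, 0 ≤ t ∧ q = (y t, ς t)} (by
    rintro _ ⟨c, hc, rfl⟩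
    refine ⟨(fun t => y (c + t), fun t => ς (c + t)), ⟨aux_shift hf hy hς.1 hc, ?_, ?_, τ', hτ', N',
      aux_shift_sw hς hc⟩, by simp, by simp, fun t ht => ⟨c + t, add_nonneg hc ht, rfl⟩⟩
    · intro t ht
      exact hyχ (c + t) (add_nonneg hc ht)
    · refine ⟨⟨fun _ _ => mem_univ _, fun t t' ht htt' h => ?_⟩, fun t t' ht ht' h => ?_⟩
      · exact hyV.1.2 (c + t) (c + t') (add_nonneg hc ht) (by linarith) h
      · exact hyV.2 (c + t) (c + t') (add_nonneg hc ht) (add_nonneg hc ht') h)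
  have h0 : y 0 = 0 := (hsub ⟨0, le_rfl, rfl⟩).1
  have h1 : ε ≤ ‖y 0‖ := by
    refine ge_of_tendsto hy0.norm (Eventually.of_forall fun k => ?_)
    simpa using hts2 k
  rw [h0, norm_zero] at h1
  linarith
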